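/- Let n ≥ 1 and suppose (A,b) satisfies Setting B with constant δ ∈ (n/(n+π²),1]. Define γ := tr A/(|A|² + |b|²), Ã := γA, b̃ := γb, and κ := (δ − n/(n+π²))·(n+π²)/π². Then for every twice continuously differentiable ℤⁿ-periodic function φ : ℝⁿ → ℝ there holds ∫_Y Δφ·(Ã:D²φ + b̃·∇φ) ≥ (1 − √(1−κ)) ∫_Y (Δφ)², where D²φ is the Hessian, ∇φ the gradient and Δφ the Laplacian of φ. -/

import Mathlib

open MeasureTheory

noncomputable section

/-- The unit cell `Y = (0,1)^n`. -/
def unitCell (n : ℕ) : Set (Fin n → ℝ) := Set.univ.pi fun _ => Set.Ioo (0 : ℝ) 1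

/-- Frobenius norm squared of a matrix. -/
def frobSq {n : ℕ} (M : Matrix (Fin n) (Fin n) ℝ) : ℝ := ∑ i, ∑ j, (M i j) ^ 2

/-- Frobenius inner product of two matrices. -/
def frobInner {n : ℕ} (M N : Matrix (Fin n) (Fin n) ℝ) : ℝ := ∑ i, ∑ j, M i j * N i j

/-- Euclidean norm squared of a vector. -/
def euclSq {n : ℕ} (v : Fin n → ℝ) : ℝ := ∑ i, (v i) ^ 2

/-- Euclidean dot product. -/
def dotc {n : ℕ} (v w : Fin n → ℝ) : ℝ := ∑ i, v i * w i

/-- `ℤⁿ`-periodicity of a function on `ℝⁿ`. -/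
def IsPeriodic {n : ℕ} {α : Type*} (f : (Fin n → ℝ) → α) : Prop :=
  ∀ (x : Fin n → ℝ) (k : Fin n → ℤ), f (x + fun i => (k i : ℝ)) = f x

/-- Partial derivative in direction `i`. -/
def pd {n : ℕ} (f : (Fin n → ℝ) → ℝ) (i : Fin n) (x : Fin n → ℝ) : ℝ :=
  fderiv ℝ f x (Pi.single i 1)

/-- Gradient. -/
def grad {n : ℕ} (f : (Fin n → ℝ) → ℝ) (x : Fin n → ℝ) : Fin n → ℝ := fun i => pd f i x

/-- Hessian matrix. -/
def hess {n : ℕ} (f : (Fin n → ℝ) → ℝ) (x : Fin n → ℝ) : Matrix (Fin n) (Fin n) ℝ :=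
  Matrix.of fun i j => pd (pd f j) i x

/-- Laplacian. -/
def lap {n : ℕ} (f : (Fin n → ℝ) → ℝ) (x : Fin n → ℝ) : ℝ := ∑ i, pd (pd f i) i x

/-- Jacobian matrix of a vector field: `(jac w x) i j = ∂_j w_i (x)`. -/
def jac {n : ℕ} (w : (Fin n → ℝ) → Fin n → ℝ) (x : Fin n → ℝ) : Matrix (Fin n) (Fin n) ℝ :=
  Matrix.of fun i j => pd (fun y => w y i) j x

/-- Divergence of a vector field. -/
def divg {n : ℕ} (w : (Fin n → ℝ) → Fin n → ℝ) (x : Fin n → ℝ) : ℝ :=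
  ∑ i, pd (fun y => w y i) i x

/-- Setting B: symmetric-valued, measurable, `ℤⁿ`-periodic, essentially bounded coefficients,
uniform ellipticity, and the Cordes-type condition with constant `δ ∈ (n/(n+π²), 1]`. -/
structure SettingB {n : ℕ} (A : (Fin n → ℝ) → Matrix (Fin n) (Fin n) ℝ)
    (b : (Fin n → ℝ) → Fin n → ℝ) (lam Lam δ : ℝ) : Prop where
  symm : ∀ x, (A x).IsSymm
  measA : ∀ i j, Measurable fun x => A x i j
  measb : ∀ i, Measurable fun x => b x i
  perA : IsPeriodic A
  perb : IsPeriodic b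
  bddA : ∃ C : ℝ, ∀ᵐ x ∂(volume : Measure (Fin n → ℝ)), frobSq (A x) ≤ C
  bddb : ∃ C : ℝ, ∀ᵐ x ∂(volume : Measure (Fin n → ℝ)), euclSq (b x) ≤ C
  lam_pos : 0 < lam
  lam_le_Lam : lam ≤ Lam
  ellip : ∀ᵐ x ∂(volume : Measure (Fin n → ℝ)), ∀ ξ : Fin n → ℝ,
    lam * euclSq ξ ≤ dotc ξ (Matrix.mulVec (A x) ξ) ∧
      dotc ξ (Matrix.mulVec (A x) ξ) ≤ Lam * euclSq ξ
  delta_mem : δ ∈ Set.Ioc ((n : ℝ) / ((n : ℝ) + Real.pi ^ 2)) 1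
  cordes : ∀ᵐ x ∂(volume : Measure (Fin n → ℝ)),
    (frobSq (A x) + euclSq (b x)) / (Matrix.trace (A x)) ^ 2 ≤ 1 / ((n : ℝ) - 1 + δ)

/-- The renormalization function `γ = tr A / (|A|² + |b|²)`. -/
def gam {n : ℕ} (A : (Fin n → ℝ) → Matrix (Fin n) (Fin n) ℝ)
    (b : (Fin n → ℝ) → Fin n → ℝ) (x : Fin n → ℝ) : ℝ :=
  Matrix.trace (A x) / (frobSq (A x) + euclSq (b x))

/-- The constant `κ = (δ − n/(n+π²))·(n+π²)/π²`. -/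
def kappa (n : ℕ) (δ : ℝ) : ℝ :=
  (δ - (n : ℝ) / ((n : ℝ) + Real.pi ^ 2)) * (((n : ℝ) + Real.pi ^ 2) / Real.pi ^ 2)

/-- The invariant measure: measurable, `ℤⁿ`-periodic, square-integrable over `Y`,
with unit mass over `Y`, solving the stationary FPK equation in the very weak sense. -/
def IsInvariantMeasure {n : ℕ} (A : (Fin n → ℝ) → Matrix (Fin n) (Fin n) ℝ)
    (b : (Fin n → ℝ) → Fin n → ℝ) (r : (Fin n → ℝ) → ℝ) : Prop :=
  Measurable r ∧ IsPeriodic r ∧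
    IntegrableOn (fun x => (r x) ^ 2) (unitCell n) ∧
    (∫ x in unitCell n, r x) = 1 ∧
    ∀ φ : (Fin n → ℝ) → ℝ, ContDiff ℝ 2 φ → IsPeriodic φ →
      (∫ x in unitCell n,
        r x * (frobInner (A x) (hess φ x) + dotc (b x) (grad φ x))) = 0

/-- The bilinear form `B₂`. -/
def B2 {n : ℕ} (A : (Fin n → ℝ) → Matrix (Fin n) (Fin n) ℝ)
    (b : (Fin n → ℝ) → Fin n → ℝ) (v w : (Fin n → ℝ) → Fin n → ℝ) : ℝ :=
  (∫ x in unitCell n,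
    divg v x * (frobInner (gam A b x • A x) (jac w x) + dotc (gam A b x • b x) (w x)))
  + (1 / 2) * ∫ x in unitCell n,
      frobInner (jac v x - (jac v x).transpose) (jac w x - (jac w x).transpose)

/-! The function `Ã : D²φ + b̃ · ∇φ` is a perturbation of `Δφ` in `L²(Y)`. The choice of `γ` turns
the Cordes condition into `|Ã - I|² + |b̃|² ≤ 1 - δ`, so by Cauchy–Schwarz the square of the
perturbation is at most `(1 - δ)(|D²φ|² + |∇φ|²)`. On the torus `∫ |D²φ|² = ∫ (Δφ)²`; since `φ` is
only `C²`, this is obtained by differentiating `∫ ∂ᵢφ(x + t eᵢ) ∂ⱼⱼφ(x) dx` in `t`, which never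
takes a third derivative. Along each coordinate line `∂ᵢφ` has mean zero, which gives
`∫ |∇φ|² ≤ (1/12) ∫ |D²φ|²`, and `1 + 1/12 ≤ 1 + n/π²` while `1 - κ = (1 - δ)(1 + n/π²)`. -/

section L2

lemma one_sub_mul_sq_norm_le_inner {E : Type*} [NormedAddCommGroup E] [InnerProductSpace ℝ E]
    {f g : E} {s : ℝ} (h : ‖g - f‖ ≤ s * ‖f‖) : (1 - s) * ‖f‖ ^ 2 ≤ inner ℝ f g := by
  have hsplit : inner ℝ f g = ‖f‖ ^ 2 + inner ℝ f (g - f) := by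
    rw [inner_sub_right, real_inner_self_eq_norm_sq]
    ring
  have hcs : -(‖f‖ * ‖g - f‖) ≤ inner ℝ f (g - f) :=
    (abs_le.1 (abs_real_inner_le_norm f (g - f))).1
  nlinarith [mul_le_mul_of_nonneg_left h (norm_nonneg f)]

variable {α : Type*} [MeasurableSpace α] {μ : Measure α} {f g : α → ℝ}

lemma inner_toLp_eq_integral_mul (hf : MemLp f 2 μ) (hg : MemLp g 2 μ) :
    inner ℝ (hf.toLp f) (hg.toLp g) = ∫ x, f x * g x ∂μ := by
  rw [L2.inner_def]
  refine integral_congr_ae ?_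
  filter_upwards [hf.coeFn_toLp, hg.coeFn_toLp] with x hfx hgx
  rw [hfx, hgx, RCLike.inner_apply, conj_trivial, mul_comm]

lemma norm_toLp_sq_eq_integral_sq (hf : MemLp f 2 μ) : ‖hf.toLp f‖ ^ 2 = ∫ x, f x ^ 2 ∂μ := by
  rw [← real_inner_self_eq_norm_sq, inner_toLp_eq_integral_mul]
  simp only [sq]

theorem one_sub_mul_integral_sq_le_integral_mul {s : ℝ} (hs : 0 ≤ s) (hf : MemLp f 2 μ)
    (hg : MemLp g 2 μ) (h : ∫ x, (g x - f x) ^ 2 ∂μ ≤ s ^ 2 * ∫ x, f x ^ 2 ∂μ) :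
    (1 - s) * ∫ x, f x ^ 2 ∂μ ≤ ∫ x, f x * g x ∂μ := by
  rw [← inner_toLp_eq_integral_mul hf hg, ← norm_toLp_sq_eq_integral_sq hf]
  refine one_sub_mul_sq_norm_le_inner (abs_le_of_sq_le_sq' ?_ (by positivity)).2
  rw [← MemLp.toLp_sub, norm_toLp_sq_eq_integral_sq, mul_pow, norm_toLp_sq_eq_integral_sq]
  exact h

end L2

section Calculus

variable {E : Type*} [NormedAddCommGroup E] [NormedSpace ℝ E]

lemma hasDerivAt_comp_add_smul {u : E → ℝ} (hu : Differentiable ℝ u) (x e : E) (t : ℝ) :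
    HasDerivAt (fun s : ℝ => u (x + s • e)) (fderiv ℝ u (x + t • e) e) t := by
  have hline : HasDerivAt (fun s : ℝ => x + s • e) e t := by
    simpa using ((hasDerivAt_id t).smul_const e).const_add x
  exact (hu _).hasFDerivAt.comp_hasDerivAt t hline

lemma hasDerivAt_setIntegral_comp_add_smul_mul [MeasurableSpace E] [BorelSpace E] {μ : Measure E}
    [IsFiniteMeasureOnCompacts μ] {K : Set E} (hK : IsCompact K) {u w : E → ℝ}
    (hu : ContDiff ℝ 1 u) (hw : Continuous w) (e : E) :
    HasDerivAt (fun t : ℝ => ∫ x in K, u (x + t • e) * w x ∂μ)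
      (∫ x in K, fderiv ℝ u x e * w x ∂μ) 0 := by
  have hu₀ := hu.continuous
  have := hu.continuous_fderiv one_ne_zero
  have hF : ∀ t : ℝ, Continuous fun x => u (x + t • e) * w x := fun t => by fun_prop
  have hF' : Continuous fun p : ℝ × E => fderiv ℝ u (p.2 + p.1 • e) e * w p.2 := by fun_prop
  obtain ⟨C, hC⟩ := ((isCompact_closedBall (0 : ℝ) 1).prod hK).exists_bound_of_continuousOn
    hF'.continuousOn
  have key := (hasDerivAt_integral_of_dominated_loc_of_deriv_le (μ := μ.restrict K)
    (F := fun (t : ℝ) x => u (x + t • e) * w x)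
    (F' := fun (t : ℝ) x => fderiv ℝ u (x + t • e) e * w x) (bound := fun _ => C)
    (Metric.closedBall_mem_nhds (0 : ℝ) one_pos)
    (.of_forall fun t => (hF t).aestronglyMeasurable)
    ((hF 0).continuousOn.integrableOn_compact hK)
    (hF'.comp (Continuous.prodMk_right (0 : ℝ))).aestronglyMeasurable
    ((ae_restrict_iff' hK.measurableSet).2 (.of_forall fun x hx t ht => hC (t, x) ⟨ht, hx⟩))
    (continuousOn_const.integrableOn_compact hK)
    (.of_forall fun x t _ =>
      (hasDerivAt_comp_add_smul (hu.differentiable one_ne_zero) x e t).mul_const (w x))).2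
  simpa only [zero_smul, add_zero] using key

lemma integral_sub_midpoint_sq (a b : ℝ) :
    ∫ t in a..b, (t - (a + b) / 2) ^ 2 = (b - a) ^ 3 / 12 := by
  rw [intervalIntegral.integral_comp_sub_right (fun t => t ^ 2), integral_pow]
  ring

lemma integral_sub_midpoint_mul_deriv {g g' : ℝ → ℝ} {a b : ℝ}
    (hg : ∀ t ∈ Set.uIcc a b, HasDerivAt g (g' t) t) (hg' : IntervalIntegrable g' volume a b)
    (hper : g b = g a) (hmean : ∫ t in a..b, g t = 0) :
    ∫ t in a..b, (t - (a + b) / 2) * g' t = (b - a) * g a := by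
  rw [intervalIntegral.integral_mul_deriv_eq_deriv_mul
    (fun t _ => (hasDerivAt_id' t).sub_const ((a + b) / 2)) hg intervalIntegrable_const hg']
  simp only [one_mul, hmean, hper]
  ring

lemma sq_le_integral_deriv_sq_of_integral_eq_zero {g g' : ℝ → ℝ} {a b : ℝ} (hab : a < b)
    (hg : ∀ t ∈ Set.uIcc a b, HasDerivAt g (g' t) t) (hg' : ContinuousOn g' (Set.uIcc a b))
    (hper : g b = g a) (hmean : ∫ t in a..b, g t = 0) :
    g a ^ 2 ≤ (b - a) / 12 * ∫ t in a..b, g' t ^ 2 := by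
  have hL : 0 < b - a := sub_pos.2 hab
  -- `c (t - (a + b) / 2)` is the derivative of the quadratic for which equality holds.
  set c := 12 * g a / (b - a) ^ 2 with hc
  have hcross : IntervalIntegrable (fun t => 2 * c * ((t - (a + b) / 2) * g' t)) volume a b :=
    ContinuousOn.intervalIntegrable (by fun_prop)
  have hquad : IntervalIntegrable (fun t => c ^ 2 * (t - (a + b) / 2) ^ 2) volume a b :=
    Continuous.intervalIntegrable (by fun_prop) a b
  have hmono : ∫ t in a..b, (2 * c * ((t - (a + b) / 2) * g' t) - c ^ 2 * (t - (a + b) / 2) ^ 2)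
      ≤ ∫ t in a..b, g' t ^ 2 :=
    intervalIntegral.integral_mono_on hab.le (hcross.sub hquad) (hg'.pow 2).intervalIntegrable
      fun t _ => by nlinarith only [sq_nonneg (g' t - c * (t - (a + b) / 2))]
  rw [intervalIntegral.integral_sub hcross hquad, intervalIntegral.integral_const_mul,
    intervalIntegral.integral_const_mul, integral_sub_midpoint_sq,
    integral_sub_midpoint_mul_deriv hg hg'.intervalIntegrable hper hmean] at hmono
  calc g a ^ 2
      = (b - a) / 12 * (2 * c * ((b - a) * g a) - c ^ 2 * ((b - a) ^ 3 / 12)) := by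
        rw [hc]
        field_simp
        ring
    _ ≤ (b - a) / 12 * ∫ t in a..b, g' t ^ 2 := by gcongr

end Calculus

section UnitCell

variable {n : ℕ} {F : Type*} [NormedAddCommGroup F]

lemma restrict_unitCell (n : ℕ) :
    (volume : Measure (Fin n → ℝ)).restrict (unitCell n) = volume.restrict (Set.Icc 0 1) :=
  Measure.restrict_congr_set Measure.univ_pi_Ioo_ae_eq_Icc

lemma integrableOn_unitCell_of_continuous {f : (Fin n → ℝ) → F} (hf : Continuous f) :
    IntegrableOn f (unitCell n) := by
  rw [IntegrableOn, restrict_unitCell]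
  exact hf.integrableOn_Icc

lemma memLp_two_unitCell_of_continuous {f : (Fin n → ℝ) → ℝ} (hf : Continuous f) :
    MemLp f 2 (volume.restrict (unitCell n)) :=
  (memLp_two_iff_integrable_sq hf.aestronglyMeasurable).2
    (integrableOn_unitCell_of_continuous (hf.pow 2))

lemma setIntegral_unitCell_finsetSum [NormedSpace ℝ F] {ι : Type*} (s : Finset ι)
    {f : ι → (Fin n → ℝ) → F} (hf : ∀ i, Continuous (f i)) :
    ∫ x in unitCell n, ∑ i ∈ s, f i x = ∑ i ∈ s, ∫ x in unitCell n, f i x :=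
  integral_finsetSum s fun i _ => integrableOn_unitCell_of_continuous (hf i)

lemma unitCell_ae_eq_fundamentalDomain (n : ℕ) :
    unitCell n =ᵐ[volume] ZSpan.fundamentalDomain (Pi.basisFun ℝ (Fin n)) := by
  rw [ZSpan.fundamentalDomain_pi_basisFun]
  exact Measure.univ_pi_Ioo_ae_eq_Icc.trans Measure.univ_pi_Ico_ae_eq_Icc.symm

end UnitCell

section Periodic

variable {n : ℕ} {α : Type*} {f : (Fin n → ℝ) → α} {u v : (Fin n → ℝ) → ℝ}

lemma IsPeriodic.comp_left {β : Type*} (hf : IsPeriodic f) (g : α → β) :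
    IsPeriodic fun x => g (f x) :=
  fun x k => congrArg g (hf x k)

protected lemma IsPeriodic.mul (hu : IsPeriodic u) (hv : IsPeriodic v) :
    IsPeriodic fun x => u x * v x :=
  fun x k => congrArg₂ (· * ·) (hu x k) (hv x k)

lemma IsPeriodic.comp_add_const (hf : IsPeriodic f) (a : Fin n → ℝ) :
    IsPeriodic fun x => f (x + a) :=
  fun x k => by simpa only [add_right_comm] using hf (x + a) k

lemma IsPeriodic.add_single_one (hf : IsPeriodic f) (i : Fin n) (x : Fin n → ℝ) :
    f (x + Pi.single i 1) = f x := by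
  convert hf x (Pi.single i 1) using 3
  ext j
  simp [Pi.single_apply]

protected lemma IsPeriodic.fderiv (hu : IsPeriodic u) : IsPeriodic (fderiv ℝ u) := fun x k => by
  rw [← fderiv_comp_add_right, funext fun y => hu y k]

protected lemma IsPeriodic.pd (hu : IsPeriodic u) (i : Fin n) : IsPeriodic (pd u i) :=
  hu.fderiv.comp_left fun L => L (Pi.single i 1)

lemma IsPeriodic.vadd_span_basisFun (hf : IsPeriodic f)
    (g : (Submodule.span ℤ (Set.range (Pi.basisFun ℝ (Fin n)))).toAddSubgroup) (x : Fin n → ℝ) :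
    f (g +ᵥ x) = f x := by
  choose k hk using ((Pi.basisFun ℝ (Fin n)).mem_span_iff_repr_mem ℤ g.1).1 g.2
  have hg : g +ᵥ x = x + fun i => (k i : ℝ) := by
    ext i
    have hki : (k i : ℝ) = g.1 i := by simpa using hk i
    rw [Pi.add_apply, hki, add_comm]
    rfl
  rw [hg, hf]

open scoped Pointwise in
theorem IsPeriodic.setIntegral_unitCell_comp_add {F : Type*} [NormedAddCommGroup F]
    [NormedSpace ℝ F] {f : (Fin n → ℝ) → F} (hf : IsPeriodic f) (a : Fin n → ℝ) :
    ∫ x in unitCell n, f (x + a) = ∫ x in unitCell n, f x := by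
  let Λ := (Submodule.span ℤ (Set.range (Pi.basisFun ℝ (Fin n)))).toAddSubgroup
  let D := ZSpan.fundamentalDomain (Pi.basisFun ℝ (Fin n))
  have : Countable Λ :=
    inferInstanceAs (Countable (Submodule.span ℤ (Set.range (Pi.basisFun ℝ (Fin n)))))
  have hD : IsAddFundamentalDomain Λ D (volume : Measure (Fin n → ℝ)) :=
    ZSpan.isAddFundamentalDomain' (Pi.basisFun ℝ (Fin n)) volume
  calc ∫ x in unitCell n, f (x + a)
      = ∫ x in D, f (a +ᵥ x) := by
        rw [setIntegral_congr_set (unitCell_ae_eq_fundamentalDomain n)]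
        simp only [vadd_eq_add, add_comm, D]
    _ = ∫ x in a +ᵥ D, f x := by
        rw [← Set.image_vadd, (measurePreserving_vadd a volume).setIntegral_image_emb
          (measurableEmbedding_const_vadd a)]
    _ = ∫ x in D, f x := (hD.vadd_of_comm a).setIntegral_eq hD hf.vadd_span_basisFun
    _ = ∫ x in unitCell n, f x :=
        (setIntegral_congr_set (unitCell_ae_eq_fundamentalDomain n)).symm

end Periodic

section IntegrationByParts

variable {n : ℕ} {u v w : (Fin n → ℝ) → ℝ}

lemma hasDerivAt_setIntegral_unitCell_comp_add_smul_mul (hu : ContDiff ℝ 1 u) (hw : Continuous w)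
    (e : Fin n → ℝ) :
    HasDerivAt (fun t : ℝ => ∫ x in unitCell n, u (x + t • e) * w x)
      (∫ x in unitCell n, fderiv ℝ u x e * w x) 0 := by
  simp only [restrict_unitCell]
  exact hasDerivAt_setIntegral_comp_add_smul_mul isCompact_Icc hu hw e

lemma IsPeriodic.setIntegral_fderiv_apply_eq_zero (hup : IsPeriodic u) (hu : ContDiff ℝ 1 u)
    (e : Fin n → ℝ) : ∫ x in unitCell n, fderiv ℝ u x e = 0 := by
  have h := hasDerivAt_setIntegral_unitCell_comp_add_smul_mul hu (w := 1) continuous_const e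
  simp only [Pi.one_apply, mul_one, hup.setIntegral_unitCell_comp_add] at h
  exact h.unique (hasDerivAt_const _ _)

lemma IsPeriodic.setIntegral_fderiv_apply_mul (hup : IsPeriodic u) (hvp : IsPeriodic v)
    (hu : ContDiff ℝ 1 u) (hv : ContDiff ℝ 1 v) (e : Fin n → ℝ) :
    ∫ x in unitCell n, fderiv ℝ u x e * v x = -∫ x in unitCell n, u x * fderiv ℝ v x e := by
  have hu₀ := hu.continuous
  have hv₀ := hv.continuous
  have := hu.continuous_fderiv one_ne_zero
  have := hv.continuous_fderiv one_ne_zero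
  have hprod : ∀ x, fderiv ℝ (fun y => u y * v y) x e
      = fderiv ℝ u x e * v x + u x * fderiv ℝ v x e := fun x => by
    rw [fderiv_fun_mul (hu.differentiable one_ne_zero x) (hv.differentiable one_ne_zero x)]
    simp only [add_apply, smul_apply, smul_eq_mul]
    ring
  have hzero := (hup.mul hvp).setIntegral_fderiv_apply_eq_zero (hu.mul hv) e
  simp only [hprod] at hzero
  rw [integral_add (integrableOn_unitCell_of_continuous (by fun_prop))
    (integrableOn_unitCell_of_continuous (by fun_prop))] at hzero
  exact eq_neg_of_add_eq_zero_left hzero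

lemma IsPeriodic.setIntegral_comp_add_mul_fderiv_apply (hup : IsPeriodic u) (hvp : IsPeriodic v)
    (hu : ContDiff ℝ 1 u) (hv : ContDiff ℝ 1 v) (a e : Fin n → ℝ) :
    ∫ x in unitCell n, u (x + a) * fderiv ℝ v x e
      = -∫ x in unitCell n, v (x + -a) * fderiv ℝ u x e := by
  have hua : ContDiff ℝ 1 fun x => u (x + a) := hu.comp (contDiff_id.add contDiff_const)
  calc ∫ x in unitCell n, u (x + a) * fderiv ℝ v x e
      = -∫ x in unitCell n, v x * fderiv ℝ u (x + a) e := by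
        rw [← neg_eq_iff_eq_neg,
          ← (hup.comp_add_const a).setIntegral_fderiv_apply_mul hvp hua hv e]
        simp only [fderiv_comp_add_right, mul_comm]
    _ = -∫ x in unitCell n, v (x + -a) * fderiv ℝ u x e := by
        rw [← ((hvp.comp_add_const (-a)).mul
          (hup.fderiv.comp_left fun L => L e)).setIntegral_unitCell_comp_add a]
        simp only [add_neg_cancel_right]

theorem IsPeriodic.setIntegral_fderiv_apply_mul_fderiv_apply_comm (hup : IsPeriodic u)
    (hvp : IsPeriodic v) (hu : ContDiff ℝ 1 u) (hv : ContDiff ℝ 1 v) (d e : Fin n → ℝ) :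
    ∫ x in unitCell n, fderiv ℝ u x d * fderiv ℝ v x e
      = ∫ x in unitCell n, fderiv ℝ u x e * fderiv ℝ v x d := by
  have hcont : ∀ {f : (Fin n → ℝ) → ℝ}, ContDiff ℝ 1 f → Continuous fun x => fderiv ℝ f x e :=
    fun hf => (hf.continuous_fderiv one_ne_zero).clm_apply continuous_const
  have hleft := hasDerivAt_setIntegral_unitCell_comp_add_smul_mul hu (hcont hv) d
  have hright := (hasDerivAt_setIntegral_unitCell_comp_add_smul_mul hv (hcont hu) (-d)).neg
  simp only [hup.setIntegral_comp_add_mul_fderiv_apply hvp hu hv, ← smul_neg] at hleft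
  rw [hleft.unique hright, ← integral_neg]
  simp only [map_neg, mul_neg, neg_neg, mul_comm]

end IntegrationByParts

section Poincare

variable {n : ℕ}

lemma IsPeriodic.setIntegral_unitCell_intervalIntegral_comp_add_smul {f : (Fin n → ℝ) → ℝ}
    (hfp : IsPeriodic f) (hf : Continuous f) (e : Fin n → ℝ) :
    ∫ x in unitCell n, ∫ t in (0 : ℝ)..1, f (x + t • e) = ∫ x in unitCell n, f x := by
  have hint : Integrable (Function.uncurry fun (t : ℝ) x => f (x + t • e))
      ((volume.restrict (Set.uIoc 0 1)).prod (volume.restrict (unitCell n))) := by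
    rw [restrict_unitCell, Measure.prod_restrict]
    exact ((by fun_prop : Continuous fun p : ℝ × (Fin n → ℝ) => f (p.2 + p.1 • e)).continuousOn
      |>.integrableOn_compact (isCompact_uIcc.prod isCompact_Icc)).mono_set
        (Set.prod_mono Set.uIoc_subset_uIcc subset_rfl)
  rw [← intervalIntegral_integral_swap hint]
  simp [hfp.setIntegral_unitCell_comp_add]

theorem IsPeriodic.setIntegral_sq_le_setIntegral_fderiv_apply_sq {u : (Fin n → ℝ) → ℝ}
    (hup : IsPeriodic u) (hu : ContDiff ℝ 1 u) {e : Fin n → ℝ} (he : ∀ x, u (x + e) = u x)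
    (hmean : ∀ x, ∫ t in (0 : ℝ)..1, u (x + t • e) = 0) :
    ∫ x in unitCell n, u x ^ 2 ≤ 1 / 12 * ∫ x in unitCell n, fderiv ℝ u x e ^ 2 := by
  have := hu.continuous_fderiv one_ne_zero
  have hline : ∀ x, u x ^ 2
      ≤ 1 / 12 * ∫ t in (0 : ℝ)..1, fderiv ℝ u (x + t • e) e ^ 2 := fun x => by
    simpa using sq_le_integral_deriv_sq_of_integral_eq_zero one_pos
      (fun t _ => hasDerivAt_comp_add_smul (hu.differentiable one_ne_zero) x e t)
      (by fun_prop) (by simp [he]) (hmean x)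
  rw [← (hup.fderiv.comp_left fun L => L e ^ 2).setIntegral_unitCell_intervalIntegral_comp_add_smul
    (by fun_prop) e, ← integral_const_mul]
  exact integral_mono (integrableOn_unitCell_of_continuous (hu.continuous.pow 2))
    (integrableOn_unitCell_of_continuous
      (continuous_const.mul (intervalIntegral.continuous_parametric_intervalIntegral_of_continuous'
        (by fun_prop) 0 1))) hline

end Poincare

section SecondDerivatives

variable {n : ℕ} {φ : (Fin n → ℝ) → ℝ}

lemma continuous_pd (hφ : ContDiff ℝ 1 φ) (i : Fin n) : Continuous (pd φ i) :=
  (hφ.continuous_fderiv one_ne_zero).clm_apply continuous_const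

lemma contDiff_one_pd (hφ : ContDiff ℝ 2 φ) (i : Fin n) : ContDiff ℝ 1 (pd φ i) :=
  (hφ.fderiv_right (by norm_num)).clm_apply contDiff_const

lemma continuous_pd_pd (hφ : ContDiff ℝ 2 φ) (i j : Fin n) : Continuous (pd (pd φ i) j) :=
  continuous_pd (contDiff_one_pd hφ i) j

lemma pd_comm (hφ : ContDiff ℝ 2 φ) (i j : Fin n) (x : Fin n → ℝ) :
    pd (pd φ i) j x = pd (pd φ j) i x := by
  have hdiff : DifferentiableAt ℝ (fderiv ℝ φ) x :=
    (hφ.fderiv_right (m := 1) (by norm_num)).differentiable one_ne_zero x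
  have hsnd : ∀ i j, pd (pd φ i) j x
      = fderiv ℝ (fderiv ℝ φ) x (Pi.single j 1) (Pi.single i 1) := fun i j => by
    change fderiv ℝ (fun y => fderiv ℝ φ y (Pi.single i 1)) x (Pi.single j 1) = _
    simp [fderiv_clm_apply hdiff (differentiableAt_const _)]
  rw [hsnd, hsnd]
  exact hφ.contDiffAt.isSymmSndFDerivAt (by simp) _ _

lemma continuous_lap (hφ : ContDiff ℝ 2 φ) : Continuous (lap φ) :=
  continuous_finsetSum _ fun i _ => continuous_pd_pd hφ i i

lemma continuous_frobSq_hess (hφ : ContDiff ℝ 2 φ) : Continuous fun x => frobSq (hess φ x) :=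
  continuous_finsetSum _ fun i _ =>
    continuous_finsetSum _ fun j _ => (continuous_pd_pd hφ j i).pow 2

lemma continuous_euclSq_grad (hφ : ContDiff ℝ 1 φ) : Continuous fun x => euclSq (grad φ x) :=
  continuous_finsetSum _ fun i _ => (continuous_pd hφ i).pow 2

theorem setIntegral_lap_sq_eq_setIntegral_frobSq_hess (hφ : ContDiff ℝ 2 φ) (hp : IsPeriodic φ) :
    ∫ x in unitCell n, lap φ x ^ 2 = ∫ x in unitCell n, frobSq (hess φ x) := by
  have hc := continuous_pd_pd hφ
  have hswap : ∀ i j, ∫ x in unitCell n, pd (pd φ i) i x * pd (pd φ j) j x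
      = ∫ x in unitCell n, pd (pd φ j) i x ^ 2 := fun i j => by
    calc ∫ x in unitCell n, pd (pd φ i) i x * pd (pd φ j) j x
        = ∫ x in unitCell n, pd (pd φ i) j x * pd (pd φ j) i x :=
          (hp.pd i).setIntegral_fderiv_apply_mul_fderiv_apply_comm (hp.pd j)
            (contDiff_one_pd hφ i) (contDiff_one_pd hφ j) _ _
      _ = ∫ x in unitCell n, pd (pd φ j) i x ^ 2 := by simp only [pd_comm hφ i j, sq]
  calc ∫ x in unitCell n, lap φ x ^ 2
      = ∫ x in unitCell n, ∑ i, ∑ j, pd (pd φ i) i x * pd (pd φ j) j x := by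
        simp only [lap, sq, Finset.sum_mul_sum]
    _ = ∑ i, ∑ j, ∫ x in unitCell n, pd (pd φ j) i x ^ 2 := by
        rw [setIntegral_unitCell_finsetSum _ fun i => by fun_prop]
        refine Finset.sum_congr rfl fun i _ => ?_
        rw [setIntegral_unitCell_finsetSum _ fun j => by fun_prop]
        exact Finset.sum_congr rfl fun j _ => hswap i j
    _ = ∫ x in unitCell n, frobSq (hess φ x) := by
        simp only [frobSq, hess, Matrix.of_apply]
        rw [setIntegral_unitCell_finsetSum _ fun i => by fun_prop]
        refine Finset.sum_congr rfl fun i _ => ?_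
        rw [setIntegral_unitCell_finsetSum _ fun j => by fun_prop]

lemma setIntegral_pd_sq_le (hφ : ContDiff ℝ 2 φ) (hp : IsPeriodic φ) (i : Fin n) :
    ∫ x in unitCell n, pd φ i x ^ 2 ≤ 1 / 12 * ∫ x in unitCell n, pd (pd φ i) i x ^ 2 := by
  have hφ₁ : ContDiff ℝ 1 φ := hφ.of_le one_le_two
  refine (hp.pd i).setIntegral_sq_le_setIntegral_fderiv_apply_sq (contDiff_one_pd hφ i)
    ((hp.pd i).add_single_one i) fun x => ?_
  have hcont : Continuous fun t : ℝ => pd φ i (x + t • Pi.single i 1) :=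
    (continuous_pd hφ₁ i).comp (by fun_prop)
  calc ∫ t in (0 : ℝ)..1, pd φ i (x + t • Pi.single i 1)
      = φ (x + (1 : ℝ) • Pi.single i 1) - φ (x + (0 : ℝ) • Pi.single i 1) :=
        intervalIntegral.integral_eq_sub_of_hasDerivAt (fun t _ =>
          hasDerivAt_comp_add_smul (hφ₁.differentiable one_ne_zero) x _ t)
          (hcont.intervalIntegrable 0 1)
    _ = 0 := by simp [hp.add_single_one]

theorem setIntegral_euclSq_grad_le (hφ : ContDiff ℝ 2 φ) (hp : IsPeriodic φ) :
    ∫ x in unitCell n, euclSq (grad φ x) ≤ 1 / 12 * ∫ x in unitCell n, frobSq (hess φ x) := by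
  have hc := continuous_pd_pd hφ
  have hdiag : ∀ x, ∑ i, pd (pd φ i) i x ^ 2 ≤ frobSq (hess φ x) := fun x =>
    Finset.sum_le_sum fun i _ => Finset.single_le_sum (f := fun j => hess φ x i j ^ 2)
      (fun j _ => sq_nonneg _) (Finset.mem_univ i)
  calc ∫ x in unitCell n, euclSq (grad φ x)
      = ∑ i, ∫ x in unitCell n, pd φ i x ^ 2 :=
        setIntegral_unitCell_finsetSum _ fun i => (continuous_pd (hφ.of_le one_le_two) i).pow 2
    _ ≤ ∑ i, 1 / 12 * ∫ x in unitCell n, pd (pd φ i) i x ^ 2 :=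
        Finset.sum_le_sum fun i _ => setIntegral_pd_sq_le hφ hp i
    _ = 1 / 12 * ∫ x in unitCell n, ∑ i, pd (pd φ i) i x ^ 2 := by
        rw [← Finset.mul_sum, setIntegral_unitCell_finsetSum _ fun i => by fun_prop]
    _ ≤ 1 / 12 * ∫ x in unitCell n, frobSq (hess φ x) := by
        refine mul_le_mul_of_nonneg_left (integral_mono (integrableOn_unitCell_of_continuous ?_)
          (integrableOn_unitCell_of_continuous (continuous_frobSq_hess hφ)) hdiag) (by norm_num)
        fun_prop

lemma setIntegral_frobSq_hess_add_euclSq_grad_le (hφ : ContDiff ℝ 2 φ) (hp : IsPeriodic φ) :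
    ∫ x in unitCell n, (frobSq (hess φ x) + euclSq (grad φ x))
      ≤ (1 + 1 / 12) * ∫ x in unitCell n, lap φ x ^ 2 := by
  rw [integral_add (integrableOn_unitCell_of_continuous (continuous_frobSq_hess hφ))
    (integrableOn_unitCell_of_continuous (continuous_euclSq_grad (hφ.of_le one_le_two))),
    setIntegral_lap_sq_eq_setIntegral_frobSq_hess hφ hp]
  linarith [setIntegral_euclSq_grad_le hφ hp]

end SecondDerivatives

section Cordes

variable {n : ℕ} {M : Matrix (Fin n) (Fin n) ℝ} {v : Fin n → ℝ} {δ : ℝ}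

lemma frobSq_nonneg (M : Matrix (Fin n) (Fin n) ℝ) : 0 ≤ frobSq M :=
  Finset.sum_nonneg fun _ _ => Finset.sum_nonneg fun _ _ => sq_nonneg _

lemma euclSq_nonneg (v : Fin n → ℝ) : 0 ≤ euclSq v :=
  Finset.sum_nonneg fun _ _ => sq_nonneg _

lemma frobSq_pos (hM : M ≠ 0) : 0 < frobSq M := by
  refine (frobSq_nonneg M).lt_of_ne' fun h => hM ?_
  ext i j
  have hrow := (Finset.sum_eq_zero_iff_of_nonneg fun i _ =>
    Finset.sum_nonneg fun j _ => sq_nonneg (M i j)).1 h i (Finset.mem_univ i)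
  exact pow_eq_zero_iff two_ne_zero |>.1 <|
    (Finset.sum_eq_zero_iff_of_nonneg fun j _ => sq_nonneg (M i j)).1 hrow j (Finset.mem_univ j)

lemma euclSq_smul (c : ℝ) (v : Fin n → ℝ) : euclSq (c • v) = c ^ 2 * euclSq v := by
  simp only [euclSq, Pi.smul_apply, smul_eq_mul, mul_pow, Finset.mul_sum]

lemma frobInner_sub_one (M H : Matrix (Fin n) (Fin n) ℝ) :
    frobInner (M - 1) H = frobInner M H - H.trace := by
  simp [frobInner, Matrix.trace, sub_mul, Finset.sum_sub_distrib, Matrix.one_apply]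

lemma frobSq_smul_sub_one (c : ℝ) (M : Matrix (Fin n) (Fin n) ℝ) :
    frobSq (c • M - 1) = c ^ 2 * frobSq M - 2 * c * M.trace + n := by
  have hentry : ∀ i j, (c • M - 1) i j ^ 2 = c ^ 2 * M i j ^ 2
      - 2 * c * (if i = j then M i j else 0) + if i = j then 1 else 0 := fun i j => by
    by_cases hij : i = j <;> simp [hij] <;> ring
  simp only [frobSq, hentry]
  simp [Finset.sum_add_distrib, Finset.sum_sub_distrib, ← Finset.mul_sum, Matrix.trace]

lemma frobInner_add_dotc_sq_le (M H : Matrix (Fin n) (Fin n) ℝ) (v w : Fin n → ℝ) :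
    (frobInner M H + dotc v w) ^ 2 ≤ (frobSq M + euclSq v) * (frobSq H + euclSq w) := by
  have h := Finset.sum_mul_sq_le_sq_mul_sq (Finset.univ : Finset ((Fin n × Fin n) ⊕ Fin n))
    (Sum.elim (fun p => M p.1 p.2) v) (Sum.elim (fun p => H p.1 p.2) w)
  simpa [Fintype.sum_sum_type, Fintype.sum_prod_type, frobInner, dotc, frobSq, euclSq] using h

theorem frobSq_sub_one_add_euclSq_le_of_cordes (htr : M.trace ≠ 0)
    (hcordes : (frobSq M + euclSq v) / M.trace ^ 2 ≤ 1 / ((n : ℝ) - 1 + δ)) :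
    frobSq ((M.trace / (frobSq M + euclSq v)) • M - 1)
      + euclSq ((M.trace / (frobSq M + euclSq v)) • v) ≤ 1 - δ := by
  have hM : M ≠ 0 := by
    rintro rfl
    exact htr (Matrix.trace_zero _ _)
  have hN : 0 < frobSq M + euclSq v := add_pos_of_pos_of_nonneg (frobSq_pos hM) (euclSq_nonneg v)
  have hquot : 0 < (frobSq M + euclSq v) / M.trace ^ 2 := by positivity
  have hden : 0 < (n : ℝ) - 1 + δ := one_div_pos.1 (hquot.trans_le hcordes)
  have hlower : (n : ℝ) - 1 + δ ≤ M.trace ^ 2 / (frobSq M + euclSq v) := by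
    simpa only [one_div_div] using (le_one_div hquot hden).1 hcordes
  have hvalue : frobSq ((M.trace / (frobSq M + euclSq v)) • M - 1)
      + euclSq ((M.trace / (frobSq M + euclSq v)) • v)
      = n - M.trace ^ 2 / (frobSq M + euclSq v) := by
    rw [frobSq_smul_sub_one, euclSq_smul]
    field_simp
    ring
  linarith

lemma le_one_of_cordes (htr : M.trace ≠ 0)
    (hcordes : (frobSq M + euclSq v) / M.trace ^ 2 ≤ 1 / ((n : ℝ) - 1 + δ)) : δ ≤ 1 :=
  sub_nonneg.1 <| (add_nonneg (frobSq_nonneg _) (euclSq_nonneg _)).trans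
    (frobSq_sub_one_add_euclSq_le_of_cordes htr hcordes)

end Cordes

section RenormalizedOperator

variable {n : ℕ} {A : (Fin n → ℝ) → Matrix (Fin n) (Fin n) ℝ} {b : (Fin n → ℝ) → Fin n → ℝ}
  {δ : ℝ} {φ : (Fin n → ℝ) → ℝ}

/-- The renormalized nondivergence-form operator `Ã : D²φ + b̃ · ∇φ`, with `Ã = γA` and
`b̃ = γb`. -/
def renormOp (A : (Fin n → ℝ) → Matrix (Fin n) (Fin n) ℝ) (b : (Fin n → ℝ) → Fin n → ℝ)
    (φ : (Fin n → ℝ) → ℝ) (x : Fin n → ℝ) : ℝ :=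
  frobInner (gam A b x • A x) (hess φ x) + dotc (gam A b x • b x) (grad φ x)

lemma measurable_gam (hA : ∀ i j, Measurable fun x => A x i j)
    (hb : ∀ i, Measurable fun x => b x i) : Measurable (gam A b) := by
  unfold gam Matrix.trace frobSq euclSq
  simp only [Matrix.diag_apply]
  fun_prop

lemma measurable_renormOp (hA : ∀ i j, Measurable fun x => A x i j)
    (hb : ∀ i, Measurable fun x => b x i) (hφ : ContDiff ℝ 2 φ) :
    Measurable (renormOp A b φ) := by
  have hγ := measurable_gam hA hb
  have h₁ := fun i => (continuous_pd (hφ.of_le one_le_two) i).measurable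
  have h₂ := fun i j => (continuous_pd_pd hφ i j).measurable
  unfold renormOp frobInner dotc hess grad
  simp only [Matrix.smul_apply, Pi.smul_apply, smul_eq_mul, Matrix.of_apply]
  fun_prop

lemma renormOp_sub_lap_sq_le {x : Fin n → ℝ} (htr : (A x).trace ≠ 0)
    (hcordes : (frobSq (A x) + euclSq (b x)) / (A x).trace ^ 2 ≤ 1 / ((n : ℝ) - 1 + δ)) :
    (renormOp A b φ x - lap φ x) ^ 2
      ≤ (1 - δ) * (frobSq (hess φ x) + euclSq (grad φ x)) := by
  have hsplit : renormOp A b φ x - lap φ x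
      = frobInner (gam A b x • A x - 1) (hess φ x) + dotc (gam A b x • b x) (grad φ x) := by
    rw [frobInner_sub_one, renormOp, add_sub_right_comm]
    rfl
  rw [hsplit]
  exact (frobInner_add_dotc_sq_le _ _ _ _).trans <| mul_le_mul_of_nonneg_right
    (frobSq_sub_one_add_euclSq_le_of_cordes htr hcordes)
    (add_nonneg (frobSq_nonneg _) (euclSq_nonneg _))

lemma memLp_two_renormOp_sub_lap (hA : ∀ i j, Measurable fun x => A x i j)
    (hb : ∀ i, Measurable fun x => b x i) (htr : ∀ᵐ x, (A x).trace ≠ 0)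
    (hcordes : ∀ᵐ x, (frobSq (A x) + euclSq (b x)) / (A x).trace ^ 2 ≤ 1 / ((n : ℝ) - 1 + δ))
    (hφ : ContDiff ℝ 2 φ) :
    MemLp (fun x => renormOp A b φ x - lap φ x) 2 (volume.restrict (unitCell n)) := by
  have hmeas : Measurable fun x => renormOp A b φ x - lap φ x :=
    (measurable_renormOp hA hb hφ).sub (continuous_lap hφ).measurable
  have hbound : IntegrableOn (fun x => (1 - δ) * (frobSq (hess φ x) + euclSq (grad φ x)))
      (unitCell n) :=
    integrableOn_unitCell_of_continuous <| continuous_const.mul <|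
      (continuous_frobSq_hess hφ).add (continuous_euclSq_grad (hφ.of_le one_le_two))
  refine (memLp_two_iff_integrable_sq hmeas.aestronglyMeasurable).2
    (hbound.mono' (hmeas.pow_const 2).aestronglyMeasurable (ae_restrict_of_ae ?_))
  filter_upwards [htr, hcordes] with x htrx hcx
  rw [Real.norm_of_nonneg (sq_nonneg _)]
  exact renormOp_sub_lap_sq_le htrx hcx

lemma setIntegral_renormOp_sub_lap_sq_le (htr : ∀ᵐ x, (A x).trace ≠ 0)
    (hcordes : ∀ᵐ x, (frobSq (A x) + euclSq (b x)) / (A x).trace ^ 2 ≤ 1 / ((n : ℝ) - 1 + δ))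
    (hφ : ContDiff ℝ 2 φ) (hp : IsPeriodic φ) :
    ∫ x in unitCell n, (renormOp A b φ x - lap φ x) ^ 2
      ≤ (1 - δ) * (1 + 1 / 12) * ∫ x in unitCell n, lap φ x ^ 2 := by
  have hδ : 0 ≤ 1 - δ := by
    obtain ⟨x, htrx, hcx⟩ := (htr.and hcordes).exists
    linarith [le_one_of_cordes htrx hcx]
  calc ∫ x in unitCell n, (renormOp A b φ x - lap φ x) ^ 2
      ≤ ∫ x in unitCell n, (1 - δ) * (frobSq (hess φ x) + euclSq (grad φ x)) := by
        refine integral_mono_of_nonneg (.of_forall fun x => sq_nonneg _)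
          (integrableOn_unitCell_of_continuous <| continuous_const.mul <|
            (continuous_frobSq_hess hφ).add (continuous_euclSq_grad (hφ.of_le one_le_two)))
          (ae_restrict_of_ae ?_)
        filter_upwards [htr, hcordes] with x htrx hcx using renormOp_sub_lap_sq_le htrx hcx
    _ ≤ (1 - δ) * (1 + 1 / 12) * ∫ x in unitCell n, lap φ x ^ 2 := by
        rw [integral_const_mul, mul_assoc]
        exact mul_le_mul_of_nonneg_left (setIntegral_frobSq_hess_add_euclSq_grad_le hφ hp) hδ

lemma one_sub_kappa (n : ℕ) (δ : ℝ) : 1 - kappa n δ = (1 - δ) * (1 + n / Real.pi ^ 2) := by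
  have := Real.pi_pos
  have hden : (n : ℝ) + Real.pi ^ 2 ≠ 0 := by positivity
  unfold kappa
  field_simp
  ring

lemma one_twelfth_le_div_pi_sq (hn : 1 ≤ n) : 1 / 12 ≤ (n : ℝ) / Real.pi ^ 2 := by
  have hpi : Real.pi ^ 2 ≤ 12 := by nlinarith [Real.pi_lt_d2, Real.pi_pos]
  exact div_le_div₀ n.cast_nonneg (by exact_mod_cast hn) (by positivity) hpi

lemma SettingB.trace_pos {lam Lam : ℝ} (hn : 1 ≤ n) (hAB : SettingB A b lam Lam δ) :
    ∀ᵐ x, 0 < (A x).trace := by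
  filter_upwards [hAB.ellip] with x hx
  refine Finset.sum_pos (fun i _ => ?_) ⟨⟨0, hn⟩, Finset.mem_univ _⟩
  have hdiag : lam ≤ A x i i := by
    simpa [euclSq, dotc, Pi.single_apply] using (hx (Pi.single i 1)).1
  exact hAB.lam_pos.trans_le hdiag

theorem stmt_7_general (hA : ∀ i j, Measurable fun x => A x i j)
    (hb : ∀ i, Measurable fun x => b x i) (htr : ∀ᵐ x, (A x).trace ≠ 0)
    (hcordes : ∀ᵐ x, (frobSq (A x) + euclSq (b x)) / (A x).trace ^ 2 ≤ 1 / ((n : ℝ) - 1 + δ))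
    (hφ : ContDiff ℝ 2 φ) (hp : IsPeriodic φ) :
    (∫ x in unitCell n,
      lap φ x * (frobInner (gam A b x • A x) (hess φ x) + dotc (gam A b x • b x) (grad φ x)))
      ≥ (1 - √(1 - kappa n δ)) * ∫ x in unitCell n, lap φ x ^ 2 := by
  obtain ⟨x, htrx, hcx⟩ := (htr.and hcordes).exists
  have hδ : 0 ≤ 1 - δ := sub_nonneg.2 (le_one_of_cordes htrx hcx)
  have hn : 1 ≤ n := Nat.one_le_iff_ne_zero.2 fun h => by
    subst h
    exact htrx (Matrix.trace_fin_zero _)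
  have hlap := memLp_two_unitCell_of_continuous (continuous_lap hφ)
  have hLφ : MemLp (renormOp A b φ) 2 (volume.restrict (unitCell n)) := by
    simpa [Pi.add_def] using hlap.add (memLp_two_renormOp_sub_lap hA hb htr hcordes hφ)
  have hconst : (1 - δ) * (1 + 1 / 12) ≤ √(1 - kappa n δ) ^ 2 := by
    rw [one_sub_kappa, Real.sq_sqrt (by positivity)]
    gcongr ?_ * (1 + ?_)
    exact one_twelfth_le_div_pi_sq hn
  exact one_sub_mul_integral_sq_le_integral_mul (Real.sqrt_nonneg _) hlap hLφ <|
    (setIntegral_renormOp_sub_lap_sq_le htr hcordes hφ hp).trans <|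
      mul_le_mul_of_nonneg_right hconst (integral_nonneg fun _ => sq_nonneg _)

end RenormalizedOperator

/-- In Setting B, for every `C²` periodic function `φ` there holds
`∫_Y Δφ·(Ã:D²φ + b̃·∇φ) ≥ (1 − √(1−κ)) ∫_Y (Δφ)²`. -/
theorem stmt_7 {n : ℕ} (hn : 1 ≤ n)
    (A : (Fin n → ℝ) → Matrix (Fin n) (Fin n) ℝ) (b : (Fin n → ℝ) → Fin n → ℝ)
    (lam Lam δ : ℝ) (hAB : SettingB A b lam Lam δ) :
    ∀ φ : (Fin n → ℝ) → ℝ, ContDiff ℝ 2 φ → IsPeriodic φ →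
      (∫ x in unitCell n,
        lap φ x * (frobInner (gam A b x • A x) (hess φ x)
          + dotc (gam A b x • b x) (grad φ x)))
        ≥ (1 - Real.sqrt (1 - kappa n δ)) * ∫ x in unitCell n, (lap φ x) ^ 2 :=
  fun _ hφ hp => stmt_7_general hAB.measA hAB.measb ((hAB.trace_pos hn).mono fun _ => ne_of_gt)
    hAB.cordes hφ hp
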